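/- Let L be a nonempty set, M a set, ⊨ ⊆ M × L a binary relation, and let f : 2^M → 2^M satisfy Contraction, Coherence and Local Monotonicity. Define > on 2^M by: X > Y iff f(X) ≠ ∅ and Y ∩ f(X ∪ Y) = ∅, and define C : 2^L → 2^L by C(A) = Th(f(Mod(A))). Then for all A ⊆ L and a ∈ L: a ∈ C(A) iff either Mod(A) ∩ Mod({a}) > Mod(A) \ Mod({a}), or not Mod(A) > ∅. -/

import Mathlib

/-- Mod(A): the set of models satisfying every formula in A. -/
def ModSet {M L : Type} (sat : M → L → Prop) (A : Set L) : Set M :=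
  {x | ∀ a ∈ A, sat x a}

/-- Th(X): the set of formulas satisfied in every model of X. -/
def ThSet {M L : Type} (sat : M → L → Prop) (X : Set M) : Set L :=
  {a | ∀ x ∈ X, sat x a}

/-- The operation defined by a choice function satisfies the qualitative-measure
definition through the induced relation. -/
theorem stmt_4 {L M : Type} [Nonempty L] (sat : M → L → Prop)
    (f : Set M → Set M)
    (hContr : ∀ X : Set M, f X ⊆ X)
    (hCoh : ∀ X Y : Set M, X ⊆ Y → X ∩ f Y ⊆ f X)
    (hLM : ∀ X Y : Set M, f X ⊆ Y → Y ⊆ X → f Y ⊆ f X)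
    (gt : Set M → Set M → Prop)
    (hgt : ∀ X Y : Set M, gt X Y ↔ f X ≠ ∅ ∧ Y ∩ f (X ∪ Y) = ∅)
    (C : Set L → Set L)
    (hC : ∀ A : Set L, C A = ThSet sat (f (ModSet sat A))) :
    ∀ (A : Set L) (a : L),
      a ∈ C A ↔
        (gt (ModSet sat A ∩ ModSet sat {a}) (ModSet sat A \ ModSet sat {a}) ∨
         ¬ gt (ModSet sat A) ∅) := by
  intro A a
  have hmem : ∀ x, x ∈ ModSet sat {a} ↔ sat x a := by
    intro x
    simp [ModSet]
  have hCm : a ∈ C A ↔ ∀ x ∈ f (ModSet sat A), sat x a := by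
    rw [hC]
    rfl
  rw [hCm, hgt, hgt, Set.inter_union_sdiff, Set.empty_inter]
  constructor
  · intro h
    by_cases he : f (ModSet sat A) = ∅
    · right
      exact fun hh => hh.1 he
    · left
      obtain ⟨x, hx⟩ := Set.nonempty_iff_ne_empty.mpr he
      refine ⟨Set.nonempty_iff_ne_empty.mp ⟨x, hCoh _ _ Set.inter_subset_left
        ⟨⟨hContr _ hx, (hmem x).2 (h x hx)⟩, hx⟩⟩, ?_⟩
      rw [Set.eq_empty_iff_forall_notMem]
      rintro y ⟨⟨_, hy⟩, hyf⟩
      exact hy ((hmem y).2 (h y hyf))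
  · rintro (⟨_, h⟩ | h) x hx
    · by_contra hn
      have hx2 : x ∈ (ModSet sat A \ ModSet sat {a}) ∩ f (ModSet sat A) :=
        ⟨⟨hContr _ hx, fun hm => hn ((hmem x).1 hm)⟩, hx⟩
      rw [h] at hx2
      exact hx2
    · exact absurd ⟨Set.nonempty_iff_ne_empty.mp ⟨x, hx⟩, rfl⟩ h
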